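/- Fix M > 0, let f(λ) = (1/(2πi)) ∫_{γ_M} exp(exp(−ζ²))·e^{ζ λ} dζ for λ ∈ ℝ, and for x ∈ ℝ and t > 0 define H(x,t) = ∫_ℝ e^{−tλ²}·e^{ixλ}·f(λ) dλ. Then H is well defined (the integrand is Lebesgue integrable for every t > 0), H is smooth on ℝ × (0,∞) and satisfies the heat equation ∂H/∂t (x,t) = ∂²H/∂x² (x,t) for all x ∈ ℝ and t > 0, H(x,t) → 0 as t → 0⁺ for every x ∈ ℝ, and H is not identically zero on ℝ × (0,∞). Hence H is a non-trivial solution of the Cauchy initial value problem for the heat equation with zero initial data. -/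

import Mathlib

open MeasureTheory intervalIntegral Filter

/-- The contour integral of `g` along the clockwise contour `γ_M`, consisting of the
right branch `{π/(2τ)+iτ : τ ≥ M}` traversed downward, the horizontal segment
`{σ+iM : |σ| ≤ π/(2M)}` traversed right to left, and the left branch
`{−π/(2τ)+iτ : τ ≥ M}` traversed upward. -/
noncomputable def gammaInt (M : ℝ) (g : ℂ → ℂ) : ℂ :=
  (∫ τ in Set.Ioi M, g (((-(Real.pi / (2 * τ)) : ℝ) : ℂ) + τ * Complex.I) *
      (((Real.pi / (2 * τ ^ 2) : ℝ) : ℂ) + Complex.I))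
  - (∫ τ in Set.Ioi M, g (((Real.pi / (2 * τ) : ℝ) : ℂ) + τ * Complex.I) *
      (Complex.I - ((Real.pi / (2 * τ ^ 2) : ℝ) : ℂ)))
  - ∫ σ in (-(Real.pi / (2 * M)))..(Real.pi / (2 * M)), g ((σ : ℂ) + M * Complex.I)

/-- Absolute convergence of the three parametrized Lebesgue integrals defining the
contour integral of `g` along `γ_M`. -/
def GammaIntegrable (M : ℝ) (g : ℂ → ℂ) : Prop :=
  MeasureTheory.IntegrableOn (fun τ : ℝ =>
    g (((-(Real.pi / (2 * τ)) : ℝ) : ℂ) + τ * Complex.I) *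
      (((Real.pi / (2 * τ ^ 2) : ℝ) : ℂ) + Complex.I)) (Set.Ioi M) ∧
  MeasureTheory.IntegrableOn (fun τ : ℝ =>
    g (((Real.pi / (2 * τ) : ℝ) : ℂ) + τ * Complex.I) *
      (Complex.I - ((Real.pi / (2 * τ ^ 2) : ℝ) : ℂ))) (Set.Ioi M) ∧
  IntervalIntegrable (fun σ : ℝ => g ((σ : ℂ) + M * Complex.I))
    MeasureTheory.volume (-(Real.pi / (2 * M))) (Real.pi / (2 * M))

/-- The trace (image) of the contour `γ_M`. -/
def gammaTrace (M : ℝ) : Set ℂ :=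
  {ζ : ℂ | (M ≤ ζ.im ∧ |ζ.re| = Real.pi / (2 * ζ.im)) ∨
    (ζ.im = M ∧ |ζ.re| ≤ Real.pi / (2 * M))}

/-- The open region `D_M` lying to the right of `γ_M` as it is traversed clockwise. -/
def DM (M : ℝ) : Set ℂ := {ζ : ℂ | M < ζ.im ∧ |ζ.re| < Real.pi / (2 * ζ.im)}

/-- The heat evolution `∫ λ^m e^{-tλ²} e^{ixλ} f(λ) dλ` of the `m`-th moment of `f`. -/
noncomputable def heatMoment (f : ℝ → ℂ) (m : ℕ) (q : ℝ × ℝ) : ℂ :=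
  ∫ lam : ℝ, (lam : ℂ) ^ m *
    (Complex.exp (-(q.2 : ℂ) * lam ^ 2) * Complex.exp (Complex.I * q.1 * lam) * f lam)

lemma abs_pow_le_mul_exp_sq (m : ℕ) {t : ℝ} (ht : 0 < t) :
    ∃ C : ℝ, 0 ≤ C ∧ ∀ lam : ℝ, |lam| ^ m ≤ C * Real.exp (t * lam ^ 2) := by
  refine ⟨1 + m.factorial / t ^ m, by positivity, fun lam => ?_⟩
  have h1 : 1 ≤ Real.exp (t * lam ^ 2) := Real.one_le_exp (by positivity)
  have h2 := Real.pow_div_factorial_le_exp (t * lam ^ 2) (by positivity) m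
  have h3 : (|lam| ^ m) ^ 2 ≤ m.factorial / t ^ m * Real.exp (t * lam ^ 2) := by
    have hf : (0 : ℝ) < m.factorial := by positivity
    have htm : 0 < t ^ m := by positivity
    rw [div_le_iff₀ hf, mul_pow] at h2
    rw [div_mul_eq_mul_div, le_div_iff₀ htm, ← pow_mul, mul_comm m 2, pow_mul, sq_abs]
    linarith
  nlinarith [sq_nonneg (|lam| ^ m - 1)]

lemma norm_gaussian_wave (x t lam : ℝ) :
    ‖Complex.exp (-(t : ℂ) * lam ^ 2) * Complex.exp (Complex.I * x * lam)‖ =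
      Real.exp (-t * lam ^ 2) := by
  rw [norm_mul, Complex.norm_exp, Complex.norm_exp]
  have h1 : (-(t : ℂ) * lam ^ 2).re = -t * lam ^ 2 := by norm_cast
  have h2 : (Complex.I * x * lam).re = 0 := by simp
  rw [h1, h2]; simp

lemma aestronglyMeasurable_of_gaussian_mul {f : ℝ → ℂ}
    (hf : Integrable fun lam : ℝ => Complex.exp (-((1 : ℝ) : ℂ) * lam ^ 2) * f lam) :
    AEStronglyMeasurable f := by
  have h : AEStronglyMeasurable (fun lam : ℝ => Complex.exp ((lam : ℂ) ^ 2) *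
      (Complex.exp (-((1 : ℝ) : ℂ) * lam ^ 2) * f lam)) :=
    (Continuous.aestronglyMeasurable (by fun_prop)).mul hf.1
  refine h.congr (Eventually.of_forall fun lam => ?_)
  simp only
  rw [← mul_assoc, ← Complex.exp_add]
  simp

section HeatMoment

variable {f : ℝ → ℂ}

lemma integrable_abs_pow_mul_gaussian
    (hf : ∀ t : ℝ, 0 < t → Integrable fun lam : ℝ => Complex.exp (-(t : ℂ) * lam ^ 2) * f lam)
    (m : ℕ) {t : ℝ} (ht : 0 < t) :
    Integrable fun lam : ℝ => |lam| ^ m * (Real.exp (-t * lam ^ 2) * ‖f lam‖) := by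
  obtain ⟨C, hC, h⟩ := abs_pow_le_mul_exp_sq m (half_pos ht)
  have hm := aestronglyMeasurable_of_gaussian_mul (hf 1 one_pos)
  refine (((hf (t / 2) (half_pos ht)).norm).const_mul C).mono'
    ((Continuous.aestronglyMeasurable (by fun_prop)).mul
      ((Continuous.aestronglyMeasurable (by fun_prop)).mul hm.norm))
    (Eventually.of_forall fun lam => ?_)
  have h1 : (-((t / 2 : ℝ) : ℂ) * lam ^ 2).re = -(t / 2) * lam ^ 2 := by norm_cast
  rw [norm_mul (Complex.exp _), Complex.norm_exp, h1, Real.norm_of_nonneg (by positivity)]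
  have h2 : Real.exp (-t * lam ^ 2) =
      Real.exp (-(t / 2) * lam ^ 2) * Real.exp (-(t / 2) * lam ^ 2) := by
    rw [← Real.exp_add]; ring_nf
  have h3 : Real.exp (t / 2 * lam ^ 2) * Real.exp (-(t / 2) * lam ^ 2) = 1 := by
    rw [← Real.exp_add]; simp
  calc |lam| ^ m * (Real.exp (-t * lam ^ 2) * ‖f lam‖)
      ≤ (C * Real.exp (t / 2 * lam ^ 2)) * (Real.exp (-t * lam ^ 2) * ‖f lam‖) := by
        gcongr; exact h lam
    _ = C * (Real.exp (-(t / 2) * lam ^ 2) * ‖f lam‖) *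
        (Real.exp (t / 2 * lam ^ 2) * Real.exp (-(t / 2) * lam ^ 2)) := by rw [h2]; ring
    _ = _ := by rw [h3, mul_one]

lemma aestronglyMeasurable_heatMoment_integrand (hf : AEStronglyMeasurable f) (m : ℕ)
    (q : ℝ × ℝ) :
    AEStronglyMeasurable fun lam : ℝ => (lam : ℂ) ^ m *
      (Complex.exp (-(q.2 : ℂ) * lam ^ 2) * Complex.exp (Complex.I * q.1 * lam) * f lam) :=
  (Continuous.aestronglyMeasurable (by fun_prop)).mul
    ((Continuous.aestronglyMeasurable (by fun_prop)).mul hf)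

lemma norm_heatMoment_integrand (m : ℕ) (q : ℝ × ℝ) (lam : ℝ) :
    ‖(lam : ℂ) ^ m *
      (Complex.exp (-(q.2 : ℂ) * lam ^ 2) * Complex.exp (Complex.I * q.1 * lam) * f lam)‖ =
      |lam| ^ m * (Real.exp (-q.2 * lam ^ 2) * ‖f lam‖) := by
  rw [norm_mul, norm_mul _ (f lam), norm_gaussian_wave]
  simp

lemma integrable_heatMoment_integrand
    (hf : ∀ t : ℝ, 0 < t → Integrable fun lam : ℝ => Complex.exp (-(t : ℂ) * lam ^ 2) * f lam)
    (m : ℕ) {q : ℝ × ℝ} (hq : 0 < q.2) :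
    Integrable fun lam : ℝ => (lam : ℂ) ^ m *
      (Complex.exp (-(q.2 : ℂ) * lam ^ 2) * Complex.exp (Complex.I * q.1 * lam) * f lam) := by
  have hm := aestronglyMeasurable_of_gaussian_mul (hf 1 one_pos)
  refine (integrable_abs_pow_mul_gaussian hf m hq).mono'
    (aestronglyMeasurable_heatMoment_integrand hm m q) (Eventually.of_forall fun lam => ?_)
  rw [norm_heatMoment_integrand]

/-- The real-linear map `(dx, dt) ↦ a dx + b dt`. -/
noncomputable def pairCLM (a b : ℂ) : ℝ × ℝ →L[ℝ] ℂ :=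
  (ContinuousLinearMap.fst ℝ ℝ ℝ).smulRight a + (ContinuousLinearMap.snd ℝ ℝ ℝ).smulRight b

lemma pairCLM_apply (a b : ℂ) (q : ℝ × ℝ) : pairCLM a b q = q.1 * a + q.2 * b := by
  simp [pairCLM]

lemma norm_pairCLM_le (a b : ℂ) : ‖pairCLM a b‖ ≤ ‖a‖ + ‖b‖ := by
  refine ContinuousLinearMap.opNorm_le_bound _ (by positivity) fun q => ?_
  rw [pairCLM_apply, add_mul]
  refine (norm_add_le _ _).trans ?_
  rw [norm_mul, norm_mul, mul_comm ‖a‖, mul_comm ‖b‖]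
  gcongr
  · simpa using norm_fst_le q
  · simpa using norm_snd_le q

/-- `pairCLM` as a continuous linear map in its coefficients. -/
noncomputable def pairCLMLinear : ℂ × ℂ →L[ℝ] ℝ × ℝ →L[ℝ] ℂ :=
  LinearMap.mkContinuous
    { toFun := fun p => pairCLM p.1 p.2
      map_add' := fun p q => by ext <;> simp [pairCLM]
      map_smul' := fun c p => by ext <;> simp [pairCLM] } 2 (fun p => by
        refine (norm_pairCLM_le _ _).trans ?_
        linarith [norm_fst_le p, norm_snd_le p])

lemma pairCLMLinear_apply (p : ℂ × ℂ) : pairCLMLinear p = pairCLM p.1 p.2 := rfl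

lemma hasFDerivAt_heatMoment
    (hf : ∀ t : ℝ, 0 < t → Integrable fun lam : ℝ => Complex.exp (-(t : ℂ) * lam ^ 2) * f lam)
    (m : ℕ) {q : ℝ × ℝ} (hq : 0 < q.2) :
    HasFDerivAt (heatMoment f m)
      (pairCLM (Complex.I * heatMoment f (m + 1) q) (-heatMoment f (m + 2) q)) q := by
  have hm := aestronglyMeasurable_of_gaussian_mul (hf 1 one_pos)
  let F (m : ℕ) (q : ℝ × ℝ) (lam : ℝ) : ℂ := (lam : ℂ) ^ m *
    (Complex.exp (-(q.2 : ℂ) * lam ^ 2) * Complex.exp (Complex.I * q.1 * lam) * f lam)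
  have hint (m : ℕ) : Integrable (F m q) := integrable_heatMoment_integrand hf m hq
  have hpair : Integrable fun lam : ℝ => (Complex.I * F (m + 1) q lam, -F (m + 2) q lam) :=
    ((hint (m + 1)).const_mul Complex.I).prodMk (hint (m + 2)).neg
  have hbound : Integrable fun lam : ℝ =>
      |lam| ^ (m + 1) * (Real.exp (-(q.2 / 2) * lam ^ 2) * ‖f lam‖) +
      |lam| ^ (m + 2) * (Real.exp (-(q.2 / 2) * lam ^ 2) * ‖f lam‖) :=
    (integrable_abs_pow_mul_gaussian hf (m + 1) (half_pos hq)).add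
      (integrable_abs_pow_mul_gaussian hf (m + 2) (half_pos hq))
  have key := hasFDerivAt_integral_of_dominated_of_fderiv_le (𝕜 := ℝ) (μ := volume)
    (F := F m) (x₀ := q)
    (F' := fun q lam => pairCLMLinear (Complex.I * F (m + 1) q lam, -F (m + 2) q lam))
    (s := {p : ℝ × ℝ | q.2 / 2 < p.2})
    ((isOpen_lt continuous_const continuous_snd).mem_nhds (by simpa using hq))
    (Eventually.of_forall fun p => aestronglyMeasurable_heatMoment_integrand hm m p)
    (hint m) (pairCLMLinear.integrable_comp hpair).1 ?_ hbound ?_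
  · rw [ContinuousLinearMap.integral_comp_comm _ hpair, integral_pair
      (g := fun lam => -F (m + 2) q lam) ((hint (m + 1)).const_mul Complex.I)
      (hint (m + 2)).neg, MeasureTheory.integral_const_mul,
      MeasureTheory.integral_neg] at key
    exact key
  · refine Eventually.of_forall fun lam p hp => (norm_pairCLM_le _ _).trans ?_
    have hp' : q.2 / 2 < p.2 := hp
    rw [norm_neg, norm_mul Complex.I, Complex.norm_I, one_mul, norm_heatMoment_integrand,
      norm_heatMoment_integrand]
    gcongr
  · refine Eventually.of_forall fun lam p _ => ?_
    have h1 : HasFDerivAt (fun p : ℝ × ℝ => -(p.2 : ℂ) * lam ^ 2)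
        (pairCLM 0 (-(lam : ℂ) ^ 2)) p := by
      refine ((pairCLM 0 (-(lam : ℂ) ^ 2)).hasFDerivAt (x := p)).congr_of_eventuallyEq
        (Eventually.of_forall fun p => ?_)
      simp [pairCLM_apply]
    have h2 : HasFDerivAt (fun p : ℝ × ℝ => Complex.I * p.1 * lam)
        (pairCLM (Complex.I * lam) 0) p := by
      refine ((pairCLM (Complex.I * lam) 0).hasFDerivAt (x := p)).congr_of_eventuallyEq
        (Eventually.of_forall fun p => ?_)
      simp [pairCLM_apply]; ring
    refine (((h1.cexp.mul h2.cexp).mul_const (f lam)).const_mul ((lam : ℂ) ^ m)).congr_fderiv ?_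
    rw [pairCLMLinear_apply]
    ext <;> simp [pairCLM_apply, F] <;> ring

lemma contDiffOn_heatMoment
    (hf : ∀ t : ℝ, 0 < t → Integrable fun lam : ℝ => Complex.exp (-(t : ℂ) * lam ^ 2) * f lam)
    (n m : ℕ) :
    ContDiffOn ℝ n (heatMoment f m) (Set.univ ×ˢ Set.Ioi (0 : ℝ)) := by
  have hopen : IsOpen ((Set.univ : Set ℝ) ×ˢ Set.Ioi (0 : ℝ)) := isOpen_univ.prod isOpen_Ioi
  induction n generalizing m with
  | zero =>
    exact contDiffOn_zero.2 fun q hq =>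
      (hasFDerivAt_heatMoment hf m hq.2).continuousAt.continuousWithinAt
  | succ n ih =>
    push_cast
    rw [contDiffOn_succ_iff_hasFDerivWithinAt_of_uniqueDiffOn hopen.uniqueDiffOn]
    refine ⟨by simp, fun q => pairCLMLinear
      (Complex.I * heatMoment f (m + 1) q, -heatMoment f (m + 2) q), ?_,
      fun q hq => (hasFDerivAt_heatMoment hf m hq.2).hasFDerivWithinAt⟩
    exact pairCLMLinear.contDiff.comp_contDiffOn
      ((contDiffOn_const.mul (ih (m + 1))).prodMk (ih (m + 2)).neg)

lemma hasDerivAt_heatMoment_time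
    (hf : ∀ t : ℝ, 0 < t → Integrable fun lam : ℝ => Complex.exp (-(t : ℂ) * lam ^ 2) * f lam)
    (m : ℕ) (x : ℝ) {t : ℝ} (ht : 0 < t) :
    HasDerivAt (fun s => heatMoment f m (x, s)) (-heatMoment f (m + 2) (x, t)) t := by
  have h := (hasFDerivAt_heatMoment hf m (q := (x, t)) ht).comp_hasDerivAt t
    ((hasDerivAt_const t x).prodMk (hasDerivAt_id t))
  simpa [Function.comp_def, pairCLM_apply] using h

lemma hasDerivAt_heatMoment_space
    (hf : ∀ t : ℝ, 0 < t → Integrable fun lam : ℝ => Complex.exp (-(t : ℂ) * lam ^ 2) * f lam)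
    (m : ℕ) (x : ℝ) {t : ℝ} (ht : 0 < t) :
    HasDerivAt (fun y => heatMoment f m (y, t)) (Complex.I * heatMoment f (m + 1) (x, t)) x := by
  have h := (hasFDerivAt_heatMoment hf m (q := (x, t)) ht).comp_hasDerivAt x
    ((hasDerivAt_id x).prodMk (hasDerivAt_const x t))
  simpa [Function.comp_def, pairCLM_apply] using h

lemma heatMoment_heat_equation
    (hf : ∀ t : ℝ, 0 < t → Integrable fun lam : ℝ => Complex.exp (-(t : ℂ) * lam ^ 2) * f lam)
    (m : ℕ) (x : ℝ) {t : ℝ} (ht : 0 < t) :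
    deriv (fun s => heatMoment f m (x, s)) t =
      iteratedDeriv 2 (fun y => heatMoment f m (y, t)) x := by
  have h : deriv (fun y => heatMoment f m (y, t)) =
      fun y => Complex.I * heatMoment f (m + 1) (y, t) :=
    funext fun y => (hasDerivAt_heatMoment_space hf m y ht).deriv
  rw [(hasDerivAt_heatMoment_time hf m x ht).deriv, iteratedDeriv_succ, iteratedDeriv_one, h,
    ((hasDerivAt_heatMoment_space hf (m + 1) x ht).const_mul Complex.I).deriv, ← mul_assoc,
    Complex.I_mul_I, neg_one_mul]

end HeatMoment

/-- The branch of `γ_M` on which `Re ζ` has the sign `ε = ±1`, parametrized by `τ = Im ζ`. -/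
noncomputable def branch (ε τ : ℝ) : ℂ := ((ε * (Real.pi / (2 * τ)) : ℝ) : ℂ) + τ * Complex.I

/-- The velocity of `branch`. -/
noncomputable def branchDeriv (ε τ : ℝ) : ℂ :=
  Complex.I - ((ε * (Real.pi / (2 * τ ^ 2)) : ℝ) : ℂ)

/-- The doubly exponential weight `exp (exp (-ζ²))`. -/
noncomputable def expExp (ζ : ℂ) : ℂ := Complex.exp (Complex.exp (-ζ ^ 2))

lemma differentiable_expExp : Differentiable ℂ expExp := by
  unfold expExp; fun_prop

lemma branch_re (ε τ : ℝ) : (branch ε τ).re = ε * (Real.pi / (2 * τ)) := by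
  simp [branch, -Complex.ofReal_mul, -Complex.ofReal_div]

lemma branch_im (ε τ : ℝ) : (branch ε τ).im = τ := by
  simp [branch, -Complex.ofReal_mul, -Complex.ofReal_div]

lemma abs_branch_re_le {ε M τ : ℝ} (hε : |ε| = 1) (hM : 0 < M) (hτ : M ≤ τ) :
    |(branch ε τ).re| ≤ Real.pi / (2 * M) := by
  have : 0 < τ := hM.trans_le hτ
  rw [branch_re, abs_mul, hε, one_mul, abs_of_pos (by positivity)]
  gcongr

lemma measurable_branch (ε : ℝ) : Measurable (branch ε) := by
  unfold branch; fun_prop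

lemma measurable_branchDeriv (ε : ℝ) : Measurable (branchDeriv ε) := by
  unfold branchDeriv; fun_prop

lemma hasDerivAt_branch (ε : ℝ) {τ : ℝ} (hτ : τ ≠ 0) :
    HasDerivAt (branch ε) (branchDeriv ε τ) τ := by
  have h1 : HasDerivAt (fun τ : ℝ => ε * (Real.pi / (2 * τ))) (-(ε * (Real.pi / (2 * τ ^ 2)))) τ := by
    have h := ((hasDerivAt_inv hτ).const_mul (Real.pi / 2)).const_mul ε
    refine (h.congr_of_eventuallyEq (Eventually.of_forall fun s => ?_)).congr_deriv ?_
    · simp only; rw [div_mul_eq_div_div, div_eq_mul_inv _ s]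
    · field_simp
  have h2 : HasDerivAt (fun τ : ℝ => (τ : ℂ) * Complex.I) Complex.I τ := by
    simpa using (hasDerivAt_id τ).ofReal_comp.mul_const Complex.I
  refine (h1.ofReal_comp.add h2).congr_deriv ?_
  rw [branchDeriv]; push_cast; ring

lemma branch_sq {ε τ : ℝ} (hε : |ε| = 1) (hτ : τ ≠ 0) :
    branch ε τ ^ 2 =
      ((Real.pi ^ 2 / (4 * τ ^ 2) - τ ^ 2 : ℝ) : ℂ) + ε * (Real.pi * Complex.I) := by
  have hε' : (ε : ℂ) ^ 2 = 1 := by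
    have : ε ^ 2 = 1 := by rw [← sq_abs, hε, one_pow]
    exact_mod_cast this
  have hτ' : (τ : ℂ) ≠ 0 := by exact_mod_cast hτ
  rw [branch]
  push_cast
  field_simp
  linear_combination 4 * (Real.pi : ℂ) ^ 2 * hε' + 16 * (τ : ℂ) ^ 4 * Complex.I_sq

lemma exp_sign_mul_pi_mul_I {ε : ℝ} (hε : |ε| = 1) :
    Complex.exp (ε * (Real.pi * Complex.I)) = -1 := by
  rcases eq_or_eq_neg_of_abs_eq hε with rfl | rfl
  · simp
  · simp [Complex.exp_neg]

lemma exp_branch_sq {ε τ : ℝ} (hε : |ε| = 1) (hτ : τ ≠ 0) :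
    Complex.exp (branch ε τ ^ 2) = -(Real.exp (Real.pi ^ 2 / (4 * τ ^ 2) - τ ^ 2) : ℂ) := by
  rw [branch_sq hε hτ, Complex.exp_add, exp_sign_mul_pi_mul_I hε, Complex.ofReal_exp]
  ring

lemma exp_neg_branch_sq {ε τ : ℝ} (hε : |ε| = 1) (hτ : τ ≠ 0) :
    Complex.exp (-branch ε τ ^ 2) = -(Real.exp (τ ^ 2 - Real.pi ^ 2 / (4 * τ ^ 2)) : ℂ) := by
  rw [Complex.exp_neg, exp_branch_sq hε hτ, ← Complex.ofReal_neg, ← Complex.ofReal_inv,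
    ← Complex.ofReal_neg, inv_neg, ← Real.exp_neg, neg_sub]

lemma norm_expExp_branch_le {ε M τ : ℝ} (hε : |ε| = 1) (hM : 0 < M) (hτ : M ≤ τ) :
    ‖expExp (branch ε τ)‖ ≤ Real.exp (Real.pi ^ 2 / (4 * M ^ 2)) * Real.exp (-τ ^ 2) := by
  have hτ0 : 0 < τ := hM.trans_le hτ
  rw [expExp, exp_neg_branch_sq hε hτ0.ne', Complex.norm_exp, ← Complex.ofReal_neg,
    Complex.ofReal_re, ← Real.exp_add, Real.exp_le_exp]
  have h1 := Real.add_one_le_exp (τ ^ 2 - Real.pi ^ 2 / (4 * τ ^ 2))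
  have h2 : Real.pi ^ 2 / (4 * τ ^ 2) ≤ Real.pi ^ 2 / (4 * M ^ 2) := by gcongr
  linarith

lemma norm_branch_le {ε M τ : ℝ} (hε : |ε| = 1) (hM : 0 < M) (hτ : M ≤ τ) :
    ‖branch ε τ‖ ≤ Real.pi / (2 * M) + τ := by
  refine (Complex.norm_le_abs_re_add_abs_im _).trans ?_
  rw [branch_im, abs_of_pos (hM.trans_le hτ)]
  linarith [abs_branch_re_le hε hM hτ]

lemma norm_branchDeriv_le {ε M τ : ℝ} (hε : |ε| = 1) (hM : 0 < M) (hτ : M ≤ τ) :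
    ‖branchDeriv ε τ‖ ≤ 1 + Real.pi / (2 * M ^ 2) := by
  have hτ0 : 0 < τ := hM.trans_le hτ
  rw [branchDeriv]
  refine (norm_sub_le _ _).trans ?_
  rw [Complex.norm_I, Complex.norm_real, Real.norm_eq_abs, abs_mul, hε, one_mul,
    abs_of_pos (by positivity)]
  gcongr

lemma integrable_exp_quadratic {t : ℝ} (ht : 0 < t) (c d : ℝ) :
    Integrable fun s : ℝ => Real.exp (-t * s ^ 2 + c * s + d) := by
  have h := (integrable_cexp_quadratic (b := (t : ℂ)) (by simpa using ht) c d).norm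
  refine h.congr (Eventually.of_forall fun s => ?_)
  simp only [Complex.norm_exp]
  congr 1
  norm_cast

lemma branchDeriv_neg_one (τ : ℝ) :
    branchDeriv (-1) τ = ((Real.pi / (2 * τ ^ 2) : ℝ) : ℂ) + Complex.I := by
  rw [branchDeriv]; push_cast; ring

lemma gammaInt_eq_branch (M : ℝ) (g : ℂ → ℂ) :
    gammaInt M g = (∫ τ in Set.Ioi M, g (branch (-1) τ) * branchDeriv (-1) τ)
      - (∫ τ in Set.Ioi M, g (branch 1 τ) * branchDeriv 1 τ)
      - ∫ σ in (-(Real.pi / (2 * M)))..(Real.pi / (2 * M)), g ((σ : ℂ) + M * Complex.I) := by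
  simp only [gammaInt, branchDeriv_neg_one, branch]
  simp only [branchDeriv, neg_one_mul, one_mul]

lemma gammaIntegrable_iff_branch (M : ℝ) (g : ℂ → ℂ) :
    GammaIntegrable M g ↔
      IntegrableOn (fun τ : ℝ => g (branch (-1) τ) * branchDeriv (-1) τ) (Set.Ioi M) ∧
      IntegrableOn (fun τ : ℝ => g (branch 1 τ) * branchDeriv 1 τ) (Set.Ioi M) ∧
      IntervalIntegrable (fun σ : ℝ => g ((σ : ℂ) + M * Complex.I))
        volume (-(Real.pi / (2 * M))) (Real.pi / (2 * M)) := by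
  simp only [GammaIntegrable, branchDeriv_neg_one, branch]
  simp only [branchDeriv, neg_one_mul, one_mul]

lemma integrableOn_branch {ε M C c : ℝ} {g : ℂ → ℂ} (hε : |ε| = 1) (hM : 0 < M)
    (hc : 0 ≤ c) (hg : Continuous g)
    (hb : ∀ z : ℂ, |z.re| ≤ Real.pi / (2 * M) → ‖g z‖ ≤ C * Real.exp (c * ‖z‖)) :
    IntegrableOn (fun τ : ℝ => expExp (branch ε τ) * g (branch ε τ) * branchDeriv ε τ)
      (Set.Ioi M) := by
  have hC : 0 ≤ C := by
    have h := (norm_nonneg _).trans (hb 0 (by simp; positivity))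
    simpa using h
  have hdom := (((integrable_exp_quadratic one_pos c (c * (Real.pi / (2 * M)))).const_mul
    (Real.exp (Real.pi ^ 2 / (4 * M ^ 2)) * C * (1 + Real.pi / (2 * M ^ 2)))).integrableOn
    (s := Set.Ioi M))
  refine Integrable.mono' hdom ?_ ?_
  · exact (((differentiable_expExp.continuous.measurable.comp (measurable_branch ε)).mul
      (hg.measurable.comp (measurable_branch ε))).mul
      (measurable_branchDeriv ε)).aestronglyMeasurable
  · refine ae_restrict_of_forall_mem measurableSet_Ioi fun τ hτ => ?_
    have hτ' : M ≤ τ := le_of_lt hτ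
    rw [norm_mul, norm_mul]
    have h1 : ‖g (branch ε τ)‖ ≤ C * Real.exp (c * (Real.pi / (2 * M) + τ)) := by
      refine (hb _ (abs_branch_re_le hε hM hτ')).trans ?_
      gcongr
      exact norm_branch_le hε hM hτ'
    calc _ ≤ (Real.exp (Real.pi ^ 2 / (4 * M ^ 2)) * Real.exp (-τ ^ 2)) *
          (C * Real.exp (c * (Real.pi / (2 * M) + τ))) * (1 + Real.pi / (2 * M ^ 2)) := by
          gcongr
          · exact norm_expExp_branch_le hε hM hτ'
          · exact norm_branchDeriv_le hε hM hτ'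
      _ = Real.exp (Real.pi ^ 2 / (4 * M ^ 2)) * C * (1 + Real.pi / (2 * M ^ 2)) *
          (Real.exp (-τ ^ 2) * Real.exp (c * (Real.pi / (2 * M) + τ))) := by ring
      _ = _ := by rw [← Real.exp_add]; ring_nf

lemma gammaIntegrable_expExp_mul {M C c : ℝ} {g : ℂ → ℂ} (hM : 0 < M)
    (hc : 0 ≤ c) (hg : Continuous g)
    (hb : ∀ z : ℂ, |z.re| ≤ Real.pi / (2 * M) → ‖g z‖ ≤ C * Real.exp (c * ‖z‖)) :
    GammaIntegrable M fun ζ => expExp ζ * g ζ := by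
  rw [gammaIntegrable_iff_branch]
  refine ⟨integrableOn_branch (by simp) hM hc hg hb, integrableOn_branch (by simp) hM hc hg hb, ?_⟩
  have := differentiable_expExp.continuous
  exact Continuous.intervalIntegrable (by fun_prop) _ _

lemma integral_branch_of_primitive {ε M M' : ℝ} {g G : ℂ → ℂ} (hM : 0 < M) (hMM' : M ≤ M')
    (hG : ∀ z, HasDerivAt G (g z) z)
    (hi : IntegrableOn (fun τ : ℝ => g (branch ε τ) * branchDeriv ε τ) (Set.Ioi M)) :
    (∫ τ in Set.Ioi M, g (branch ε τ) * branchDeriv ε τ) =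
      G (branch ε M') - G (branch ε M) +
        ∫ τ in Set.Ioi M', g (branch ε τ) * branchDeriv ε τ := by
  rw [← integral_interval_add_Ioi hi (hi.mono_set (Set.Ioi_subset_Ioi hMM'))]
  congr 1
  refine integral_eq_sub_of_hasDerivAt (f := fun τ => G (branch ε τ)) (fun τ hτ => ?_) ?_
  · rw [Set.uIcc_of_le hMM'] at hτ
    have h := (hG (branch ε τ)).scomp τ (hasDerivAt_branch ε (hM.trans_le hτ.1).ne')
    rw [smul_eq_mul, mul_comm] at h
    exact h
  · rw [intervalIntegrable_iff_integrableOn_Ioc_of_le hMM']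
    exact hi.mono_set Set.Ioc_subset_Ioi_self

lemma integral_segment_of_primitive {g G : ℂ → ℂ} (M a b : ℝ) (hg : Continuous g)
    (hG : ∀ z, HasDerivAt G (g z) z) :
    (∫ σ in a..b, g ((σ : ℂ) + M * Complex.I)) =
      G ((b : ℂ) + M * Complex.I) - G ((a : ℂ) + M * Complex.I) := by
  refine integral_eq_sub_of_hasDerivAt (f := fun σ : ℝ => G ((σ : ℂ) + M * Complex.I))
    (fun σ _ => ?_) (Continuous.intervalIntegrable (by fun_prop) _ _)
  have h : HasDerivAt (fun σ : ℝ => (σ : ℂ) + M * Complex.I) 1 σ := by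
    simpa using (hasDerivAt_id σ).ofReal_comp.add_const (M * Complex.I)
  simpa [Function.comp_def] using (hG ((σ : ℂ) + M * Complex.I)).scomp σ h

/-- Contour integrals of entire functions along `γ_M` do not depend on `M`. -/
lemma gammaInt_eq_of_le {M M' : ℝ} {g : ℂ → ℂ} (hM : 0 < M) (hMM' : M ≤ M')
    (hg : Differentiable ℂ g) (hi : GammaIntegrable M g) : gammaInt M g = gammaInt M' g := by
  obtain ⟨G, hG'⟩ := hg.isExactOn_univ
  have hG : ∀ z, HasDerivAt G (g z) z := fun z => hG' z (Set.mem_univ z)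
  rw [gammaIntegrable_iff_branch] at hi
  rw [gammaInt_eq_branch, gammaInt_eq_branch,
    integral_branch_of_primitive hM hMM' hG hi.1, integral_branch_of_primitive hM hMM' hG hi.2.1,
    integral_segment_of_primitive _ _ _ hg.continuous hG,
    integral_segment_of_primitive _ _ _ hg.continuous hG]
  simp only [branch, neg_one_mul, one_mul]
  ring

/-- The residue computation `∫_{γ_M} ζ exp(ζ²) exp(exp(-ζ²)) dζ = -πi`: the two branches cancel
and the segment is evaluated through a primitive. -/
lemma gammaInt_expExp_mul_id_mul_exp_sq {M : ℝ} (hM : 0 < M) :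
    gammaInt M (fun ζ => expExp ζ * (ζ * Complex.exp (ζ ^ 2))) = -(Real.pi * Complex.I) := by
  have hd : Differentiable ℂ (dslope Complex.exp 0) := by
    rw [← differentiableOn_univ, Complex.differentiableOn_dslope univ_mem]
    exact Complex.differentiable_exp.differentiableOn
  obtain ⟨P, hP'⟩ := hd.isExactOn_univ
  have hP : ∀ z, HasDerivAt P (dslope Complex.exp 0 z) z := fun z => hP' z (Set.mem_univ z)
  let R : ℂ → ℂ := fun ζ => -(1 / 2) *
    (-(Complex.exp (ζ ^ 2) * expExp ζ) - ζ ^ 2 + P (Complex.exp (-ζ ^ 2)))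
  have hR : ∀ z, HasDerivAt R (expExp z * (z * Complex.exp (z ^ 2))) z := by
    intro z
    have h0 : HasDerivAt (fun z : ℂ => z ^ 2) (2 * z) z := by
      simpa using hasDerivAt_pow 2 z
    have h1 := h0.fun_neg.cexp
    have h2 := (hP (Complex.exp (-z ^ 2))).comp z h1
    have h3 := ((((h0.cexp.mul h1.cexp).neg.sub h0).add h2).const_mul (-(1 / 2) : ℂ))
    refine h3.congr_deriv ?_
    have h4 := sub_smul_dslope Complex.exp 0 (Complex.exp (-z ^ 2))
    rw [smul_eq_mul, sub_zero, Complex.exp_zero] at h4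
    have h5 : Complex.exp (z ^ 2) * Complex.exp (-z ^ 2) = 1 := by
      rw [← Complex.exp_add]; simp
    rw [expExp]
    linear_combination z * h4 - z * Complex.exp (Complex.exp (-z ^ 2)) * h5
  have hbr : (∫ τ in Set.Ioi M, expExp (branch (-1) τ) *
        (branch (-1) τ * Complex.exp (branch (-1) τ ^ 2)) * branchDeriv (-1) τ) =
      ∫ τ in Set.Ioi M, expExp (branch 1 τ) *
        (branch 1 τ * Complex.exp (branch 1 τ ^ 2)) * branchDeriv 1 τ := by
    refine setIntegral_congr_fun measurableSet_Ioi fun τ hτ => ?_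
    have hτ0 : τ ≠ 0 := (hM.trans hτ).ne'
    have hτ' : (τ : ℂ) ≠ 0 := by exact_mod_cast hτ0
    have h : branch (-1) τ * branchDeriv (-1) τ = branch 1 τ * branchDeriv 1 τ := by
      simp only [branch, branchDeriv]
      push_cast
      field_simp
      ring
    simp only [expExp]
    rw [exp_branch_sq (by simp) hτ0, exp_branch_sq (by simp) hτ0,
      exp_neg_branch_sq (by simp) hτ0, exp_neg_branch_sq (by simp) hτ0]
    linear_combination Complex.exp (-(Real.exp (τ ^ 2 - Real.pi ^ 2 / (4 * τ ^ 2)) : ℂ)) *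
      (-(Real.exp (Real.pi ^ 2 / (4 * τ ^ 2) - τ ^ 2) : ℂ)) * h
  have hcont : Continuous fun ζ : ℂ => expExp ζ * (ζ * Complex.exp (ζ ^ 2)) := by
    have := differentiable_expExp.continuous
    fun_prop
  rw [gammaInt_eq_branch, hbr, integral_segment_of_primitive M _ _ hcont hR]
  have e1 : ((-(Real.pi / (2 * M)) : ℝ) : ℂ) + M * Complex.I = branch (-1) M := by
    rw [branch, neg_one_mul]
  have e2 : ((Real.pi / (2 * M) : ℝ) : ℂ) + M * Complex.I = branch 1 M := by
    rw [branch, one_mul]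
  rw [e1, e2]
  simp only [R, expExp]
  rw [exp_branch_sq (by simp) hM.ne', exp_branch_sq (by simp) hM.ne',
    exp_neg_branch_sq (by simp) hM.ne', exp_neg_branch_sq (by simp) hM.ne',
    branch_sq (by simp) hM.ne', branch_sq (by simp) hM.ne']
  push_cast
  ring

/-- The measure on pairs `(ζ, w)` that encodes the weighted contour `exp (exp (-ζ²)) dζ` along
`γ_M`: a point `ζ` of the contour is paired with the density `w` of the weighted line element. -/
noncomputable def contourMeasure (M : ℝ) : Measure (ℂ × ℂ) :=
  (volume.restrict (Set.Ioi M)).map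
      (fun τ => (branch (-1) τ, expExp (branch (-1) τ) * branchDeriv (-1) τ)) +
    (volume.restrict (Set.Ioi M)).map
      (fun τ => (branch 1 τ, -(expExp (branch 1 τ) * branchDeriv 1 τ))) +
    (volume.restrict (Set.Ioc (-(Real.pi / (2 * M))) (Real.pi / (2 * M)))).map
      (fun σ : ℝ => ((σ : ℂ) + M * Complex.I, -expExp ((σ : ℂ) + M * Complex.I)))

instance (M : ℝ) : SFinite (contourMeasure M) := by
  unfold contourMeasure; infer_instance

lemma measurable_weighted_branch (ε : ℝ) :
    Measurable fun τ => expExp (branch ε τ) * branchDeriv ε τ :=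
  (differentiable_expExp.continuous.measurable.comp (measurable_branch ε)).mul
    (measurable_branchDeriv ε)

lemma measurable_neg_weighted_branch (ε : ℝ) :
    Measurable fun τ => -(expExp (branch ε τ) * branchDeriv ε τ) :=
  (measurable_weighted_branch ε).neg

lemma measurable_weighted_segment (M : ℝ) :
    Measurable fun σ : ℝ => ((σ : ℂ) + M * Complex.I, -expExp ((σ : ℂ) + M * Complex.I)) := by
  have := differentiable_expExp.continuous
  exact Continuous.measurable (by fun_prop)

lemma contourMeasure_integral {M : ℝ} (hM : 0 < M) {g : ℂ → ℂ} (hg : Continuous g)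
    (hi : GammaIntegrable M fun ζ => expExp ζ * g ζ) :
    Integrable (fun p : ℂ × ℂ => p.2 * g p.1) (contourMeasure M) ∧
      gammaInt M (fun ζ => expExp ζ * g ζ) = ∫ p, p.2 * g p.1 ∂contourMeasure M := by
  have hle : -(Real.pi / (2 * M)) ≤ Real.pi / (2 * M) := by
    have : 0 < Real.pi / (2 * M) := by positivity
    linarith
  have hcont : Continuous fun p : ℂ × ℂ => p.2 * g p.1 := by fun_prop
  rw [gammaIntegrable_iff_branch, intervalIntegrable_iff_integrableOn_Ioc_of_le hle] at hi
  obtain ⟨hi1, hi2, hi3⟩ := hi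
  have hm1 := ((measurable_branch (-1)).prodMk (measurable_weighted_branch (-1))).aemeasurable
    (μ := volume.restrict (Set.Ioi M))
  have hm2 := ((measurable_branch 1).prodMk (measurable_neg_weighted_branch 1)).aemeasurable
    (μ := volume.restrict (Set.Ioi M))
  have hm3 := (measurable_weighted_segment M).aemeasurable
    (μ := volume.restrict (Set.Ioc (-(Real.pi / (2 * M))) (Real.pi / (2 * M))))
  have h1 := (integrable_map_measure hcont.aestronglyMeasurable hm1).2
    (hi1.congr (Eventually.of_forall fun τ => by simp only [Function.comp_apply]; ring))
  have h2 := (integrable_map_measure hcont.aestronglyMeasurable hm2).2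
    (hi2.neg.congr (Eventually.of_forall fun τ => by
      simp only [Function.comp_apply, Pi.neg_apply]; ring))
  have h3 := (integrable_map_measure hcont.aestronglyMeasurable hm3).2
    (hi3.neg.congr (Eventually.of_forall fun τ => by
      simp only [Function.comp_apply, Pi.neg_apply]; ring))
  refine ⟨(h1.add_measure h2).add_measure h3, ?_⟩
  rw [contourMeasure]
  rw [integral_add_measure (h1.add_measure h2) h3, integral_add_measure h1 h2,
    integral_map hm1 hcont.aestronglyMeasurable, integral_map hm2 hcont.aestronglyMeasurable,
    integral_map hm3 hcont.aestronglyMeasurable, gammaInt_eq_branch, integral_of_le hle]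
  simp only [neg_mul, MeasureTheory.integral_neg, ← sub_eq_add_neg, mul_right_comm]

lemma ae_contourMeasure {M : ℝ} (hM : 0 < M) :
    ∀ᵐ p ∂contourMeasure M, |p.1.re| ≤ Real.pi / (2 * M) ∧ M ≤ p.1.im := by
  have hs : MeasurableSet {p : ℂ × ℂ | |p.1.re| ≤ Real.pi / (2 * M) ∧ M ≤ p.1.im} := by
    rw [Set.ofPred_and]
    exact (measurableSet_le (by fun_prop) (by fun_prop)).inter
      (measurableSet_le (by fun_prop) (by fun_prop))
  rw [contourMeasure, ae_add_measure_iff, ae_add_measure_iff]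
  refine ⟨⟨?_, ?_⟩, ?_⟩
  · rw [ae_map_iff
      ((measurable_branch (-1)).prodMk (measurable_weighted_branch (-1))).aemeasurable hs]
    refine ae_restrict_of_forall_mem measurableSet_Ioi fun τ hτ =>
      ⟨abs_branch_re_le (by simp) hM (le_of_lt hτ), ?_⟩
    rw [branch_im]; exact le_of_lt hτ
  · rw [ae_map_iff
      ((measurable_branch 1).prodMk (measurable_neg_weighted_branch 1)).aemeasurable hs]
    refine ae_restrict_of_forall_mem measurableSet_Ioi fun τ hτ =>
      ⟨abs_branch_re_le (by simp) hM (le_of_lt hτ), ?_⟩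
    rw [branch_im]; exact le_of_lt hτ
  · rw [ae_map_iff (measurable_weighted_segment M).aemeasurable hs]
    refine ae_restrict_of_forall_mem measurableSet_Ioc fun σ hσ => ?_
    simpa [abs_le] using And.intro hσ.1.le hσ.2

lemma integrable_contourMeasure_mul_exp_norm {M c : ℝ} (hM : 0 < M) (hc : 0 ≤ c) :
    Integrable (fun p : ℂ × ℂ => p.2 * (Real.exp (c * ‖p.1‖) : ℂ)) (contourMeasure M) := by
  have hg : Continuous fun z : ℂ => (Real.exp (c * ‖z‖) : ℂ) := by fun_prop
  refine (contourMeasure_integral hM hg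
    (gammaIntegrable_expExp_mul (C := 1) hM hc hg fun z _ => ?_)).1
  rw [Complex.norm_real, one_mul, Real.norm_of_nonneg (Real.exp_pos _).le]

section GaussianFubini

variable {ν : Measure (ℂ × ℂ)} {A t : ℝ}

lemma integrable_gaussian_wave_prod (hw : Integrable (fun p : ℂ × ℂ => p.2) ν)
    (hA : ∀ᵐ p ∂ν, |p.1.re| ≤ A) (x : ℝ) (ht : 0 < t) :
    Integrable (fun q : ℝ × ℂ × ℂ =>
      Complex.exp (-(t : ℂ) * q.1 ^ 2) * Complex.exp (Complex.I * x * q.1) *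
        (q.2.2 * Complex.exp (q.2.1 * q.1))) (volume.prod ν) := by
  have h1 : Integrable fun s : ℝ =>
      Real.exp (-t * s ^ 2 + A * s + 0) + Real.exp (-t * s ^ 2 + (-A) * s + 0) :=
    (integrable_exp_quadratic ht A 0).add (integrable_exp_quadratic ht (-A) 0)
  refine (h1.mul_prod hw.norm).mono' (Continuous.aestronglyMeasurable (by fun_prop)) ?_
  have hA' : ∀ᵐ q ∂(volume : Measure ℝ).prod ν, |q.2.1.re| ≤ A :=
    Measure.quasiMeasurePreserving_snd.ae hA
  filter_upwards [hA'] with q hq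
  rw [norm_mul, norm_gaussian_wave, norm_mul, Complex.norm_exp, Complex.re_mul_ofReal]
  have h2 : Real.exp (-t * q.1 ^ 2) * Real.exp (q.2.1.re * q.1) ≤
      Real.exp (-t * q.1 ^ 2 + A * q.1 + 0) + Real.exp (-t * q.1 ^ 2 + (-A) * q.1 + 0) := by
    rw [← Real.exp_add]
    have hq' := abs_le.1 hq
    rcases le_total 0 q.1 with h | h
    · have : Real.exp (-t * q.1 ^ 2 + q.2.1.re * q.1) ≤ Real.exp (-t * q.1 ^ 2 + A * q.1 + 0) :=
        Real.exp_le_exp.2 (by nlinarith)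
      linarith [Real.exp_pos (-t * q.1 ^ 2 + (-A) * q.1 + 0)]
    · have : Real.exp (-t * q.1 ^ 2 + q.2.1.re * q.1) ≤
          Real.exp (-t * q.1 ^ 2 + (-A) * q.1 + 0) :=
        Real.exp_le_exp.2 (by nlinarith)
      linarith [Real.exp_pos (-t * q.1 ^ 2 + A * q.1 + 0)]
  calc _ = (Real.exp (-t * q.1 ^ 2) * Real.exp (q.2.1.re * q.1)) * ‖q.2.2‖ := by ring
    _ ≤ _ := by gcongr

lemma integrable_gaussian_wave_mul_integral [SFinite ν] (hw : Integrable (fun p : ℂ × ℂ => p.2) ν)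
    (hA : ∀ᵐ p ∂ν, |p.1.re| ≤ A) (x : ℝ) (ht : 0 < t) :
    Integrable fun lam : ℝ =>
      Complex.exp (-(t : ℂ) * lam ^ 2) * Complex.exp (Complex.I * x * lam) *
        ∫ p, p.2 * Complex.exp (p.1 * lam) ∂ν := by
  have h := (integrable_gaussian_wave_prod hw hA x ht).integral_prod_left
  simpa only [MeasureTheory.integral_const_mul] using h

lemma integral_gaussian_wave_mul_integral [SFinite ν] (hw : Integrable (fun p : ℂ × ℂ => p.2) ν)
    (hA : ∀ᵐ p ∂ν, |p.1.re| ≤ A) (x : ℝ) (ht : 0 < t) :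
    ∫ lam : ℝ, Complex.exp (-(t : ℂ) * lam ^ 2) * Complex.exp (Complex.I * x * lam) *
        ∫ p, p.2 * Complex.exp (p.1 * lam) ∂ν =
      (Real.pi / t : ℂ) ^ (1 / 2 : ℂ) *
        ∫ p, p.2 * Complex.exp ((Complex.I * x + p.1) ^ 2 / (4 * t)) ∂ν := by
  have h := integral_integral_swap (f := fun (lam : ℝ) (p : ℂ × ℂ) =>
    Complex.exp (-(t : ℂ) * lam ^ 2) * Complex.exp (Complex.I * x * lam) *
      (p.2 * Complex.exp (p.1 * lam))) (integrable_gaussian_wave_prod hw hA x ht)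
  simp only [MeasureTheory.integral_const_mul] at h
  rw [h, ← MeasureTheory.integral_const_mul]
  congr 1 with p
  have h1 := fourierIntegral_gaussian (b := (t : ℂ)) (by simpa using ht) (x - Complex.I * p.1)
  have h2 : -(x - Complex.I * p.1) ^ 2 = (Complex.I * x + p.1) ^ 2 := by
    linear_combination -((x : ℂ) ^ 2 + p.1 ^ 2) * Complex.I_sq
  rw [h2] at h1
  rw [mul_left_comm, ← h1, ← MeasureTheory.integral_const_mul]
  congr 1 with lam
  have h3 : Complex.exp (Complex.I * (x - Complex.I * p.1) * lam) =
      Complex.exp (Complex.I * x * lam) * Complex.exp (p.1 * lam) := by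
    rw [← Complex.exp_add]
    congr 1
    linear_combination -(p.1 * lam) * Complex.I_sq
  rw [h3]
  ring

end GaussianFubini

lemma gammaIntegrable_expExp_mul_exp {M : ℝ} (hM : 0 < M) (lam : ℝ) :
    GammaIntegrable M fun ζ => expExp ζ * Complex.exp (ζ * lam) := by
  refine gammaIntegrable_expExp_mul (C := 1) (c := |lam|) hM (abs_nonneg _) (by fun_prop)
    fun z _ => ?_
  rw [one_mul]
  refine (Complex.norm_exp_le_exp_norm _).trans_eq ?_
  rw [norm_mul, Complex.norm_real, Real.norm_eq_abs, mul_comm]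

lemma gammaInt_expExp_mul_exp {M M' : ℝ} (hM : 0 < M) (hMM' : M ≤ M') (lam : ℝ) :
    gammaInt M (fun ζ => expExp ζ * Complex.exp (ζ * lam)) =
      ∫ p, p.2 * Complex.exp (p.1 * lam) ∂contourMeasure M' := by
  have := differentiable_expExp
  rw [gammaInt_eq_of_le hM hMM' (by fun_prop) (gammaIntegrable_expExp_mul_exp hM lam)]
  exact (contourMeasure_integral (hM.trans_le hMM') (by fun_prop)
    (gammaIntegrable_expExp_mul_exp (hM.trans_le hMM') lam)).2

lemma integrable_snd_contourMeasure {M : ℝ} (hM : 0 < M) :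
    Integrable (fun p : ℂ × ℂ => p.2) (contourMeasure M) := by
  simpa using integrable_contourMeasure_mul_exp_norm (c := 0) hM le_rfl

lemma tendsto_heat_kernel_factor (K : ℝ) :
    Tendsto (fun t : ℝ => ‖(Real.pi / t : ℂ) ^ (1 / 2 : ℂ)‖ * (Real.exp (-1 / (4 * t)) * K))
      (nhdsWithin 0 (Set.Ioi 0)) (nhds 0) := by
  have h := (tendsto_rpow_mul_exp_neg_mul_atTop_nhds_zero (1 / 2) (1 / 4) (by norm_num)).comp
    tendsto_inv_nhdsGT_zero
  have h' := h.const_mul (Real.pi ^ (1 / 2 : ℝ) * K)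
  rw [mul_zero] at h'
  refine h'.congr' ?_
  filter_upwards [self_mem_nhdsWithin] with t ht
  have ht0 : 0 < t := ht
  have e1 : (Real.pi / t : ℂ) = ((Real.pi * t⁻¹ : ℝ) : ℂ) := by push_cast; rw [div_eq_mul_inv]
  have e2 : ‖(Real.pi / t : ℂ) ^ (1 / 2 : ℂ)‖ = Real.pi ^ (1 / 2 : ℝ) * t⁻¹ ^ (1 / 2 : ℝ) := by
    rw [e1, Complex.norm_cpow_eq_rpow_re_of_pos (by positivity),
      Real.mul_rpow Real.pi_pos.le (by positivity)]
    norm_num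
  have e3 : -1 / (4 * t) = -(1 / 4) * t⁻¹ := by field_simp
  rw [e2, e3, Function.comp_apply]
  ring

lemma norm_integral_heat_kernel_le {M x t : ℝ} (hM : |x| + 3 ≤ M) (ht : 0 < t) :
    ‖∫ p, p.2 * Complex.exp ((Complex.I * x + p.1) ^ 2 / (4 * t)) ∂contourMeasure M‖ ≤
      Real.exp (-1 / (4 * t)) * ∫ p, ‖p.2‖ ∂contourMeasure M := by
  have hM3 : 3 ≤ M := by linarith [abs_nonneg x]
  have hM0 : 0 < M := by linarith
  rw [← MeasureTheory.integral_const_mul]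
  refine norm_integral_le_of_norm_le ((integrable_snd_contourMeasure hM0).norm.const_mul _) ?_
  filter_upwards [ae_contourMeasure hM0] with p hp
  rw [norm_mul, mul_comm, Complex.norm_exp]
  gcongr
  have e : ((Complex.I * x + p.1) ^ 2 / (4 * t)).re =
      (p.1.re ^ 2 - (x + p.1.im) ^ 2) / (4 * t) := by
    have : (4 * t : ℂ) = ((4 * t : ℝ) : ℂ) := by push_cast; rfl
    rw [this, Complex.div_ofReal_re, sq]
    simp [sq]
  rw [e]
  gcongr
  have h1 : |p.1.re| ≤ 1 := by
    refine hp.1.trans ?_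
    rw [div_le_one (by positivity)]
    linarith [Real.pi_lt_four]
  have h2 : p.1.re ^ 2 ≤ 1 := by
    rw [← sq_abs]; exact pow_le_one₀ (abs_nonneg _) h1
  have h3 : 3 ≤ x + p.1.im := by linarith [neg_abs_le x, hp.2]
  nlinarith

/-- Differentiating `x ↦ ∫ w exp((ix+ζ)²)` at `0` produces the nonzero residue integral, so this
function cannot vanish identically. -/
lemma exists_integral_heat_kernel_ne_zero {M : ℝ} (hM : 0 < M) :
    ∃ x : ℝ, ∫ p, p.2 * Complex.exp ((Complex.I * x + p.1) ^ 2) ∂contourMeasure M ≠ 0 := by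
  by_contra! hzero
  set A : ℝ := Real.pi / (2 * M)
  have hexp_sq : ∀ z : ℂ, |z.re| ≤ A → ‖Complex.exp (z ^ 2)‖ ≤ Real.exp (A ^ 2) := by
    intro z hz
    rw [Complex.norm_exp, Real.exp_le_exp, sq, Complex.mul_re]
    have : z.re ^ 2 ≤ A ^ 2 := sq_le_sq' (abs_le.1 hz).1 (abs_le.1 hz).2
    nlinarith [sq_nonneg z.im]
  let G (x : ℝ) (p : ℂ × ℂ) : ℂ := p.2 * Complex.exp (2 * Complex.I * x * p.1 + p.1 ^ 2)
  let G' (x : ℝ) (p : ℂ × ℂ) : ℂ :=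
    p.2 * (Complex.exp (2 * Complex.I * x * p.1 + p.1 ^ 2) * (2 * Complex.I * p.1))
  have hGzero : ∀ x, ∫ p, G x p ∂contourMeasure M = 0 := by
    intro x
    have h : ∀ p : ℂ × ℂ, G x p =
        Complex.exp ((x : ℂ) ^ 2) * (p.2 * Complex.exp ((Complex.I * x + p.1) ^ 2)) := by
      intro p
      rw [mul_left_comm, ← Complex.exp_add]
      simp only [G]
      congr 2
      linear_combination -(x : ℂ) ^ 2 * Complex.I_sq
    simp only [h, MeasureTheory.integral_const_mul, hzero, mul_zero]
  have hbound : ∀ᵐ p ∂contourMeasure M, ∀ x ∈ Metric.ball (0 : ℝ) 1,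
      ‖G' x p‖ ≤ 2 * Real.exp (A ^ 2) * ‖p.2 * (Real.exp (3 * ‖p.1‖) : ℂ)‖ := by
    filter_upwards [ae_contourMeasure hM] with p hp x hx
    have hx1 : |x| ≤ 1 := by simpa using (mem_ball_zero_iff.1 hx).le
    have h1 : ‖Complex.exp (2 * Complex.I * x * p.1)‖ ≤ Real.exp (2 * ‖p.1‖) := by
      refine (Complex.norm_exp_le_exp_norm _).trans (Real.exp_le_exp.2 ?_)
      simp only [norm_mul, Complex.norm_I, Complex.norm_real, Real.norm_eq_abs, Complex.norm_ofNat]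
      nlinarith [norm_nonneg p.1]
    have h2 : ‖p.1‖ ≤ Real.exp ‖p.1‖ := by linarith [Real.add_one_le_exp ‖p.1‖]
    have h3 : Real.exp (3 * ‖p.1‖) = Real.exp (2 * ‖p.1‖) * Real.exp ‖p.1‖ := by
      rw [← Real.exp_add]; ring_nf
    simp only [G', Complex.exp_add, norm_mul, Complex.norm_I, Complex.norm_ofNat,
      Complex.norm_real, Real.norm_of_nonneg (Real.exp_pos _).le, mul_one, h3]
    calc _ ≤ ‖p.2‖ * ((Real.exp (2 * ‖p.1‖) * Real.exp (A ^ 2)) * (2 * Real.exp ‖p.1‖)) := by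
          gcongr
          exact hexp_sq _ hp.1
      _ = _ := by ring
  have hG0 : Integrable (G 0) (contourMeasure M) := by
    refine ((integrable_snd_contourMeasure hM).norm.const_mul (Real.exp (A ^ 2))).mono'
      (Continuous.aestronglyMeasurable (by fun_prop)) ?_
    filter_upwards [ae_contourMeasure hM] with p hp
    have h := hexp_sq _ hp.1
    simp only [G, Complex.ofReal_zero, mul_zero, zero_mul, zero_add, norm_mul]
    rw [mul_comm]
    gcongr
  have hderiv := (hasDerivAt_integral_of_dominated_loc_of_deriv_le (F := G) (F' := G')
    (Metric.ball_mem_nhds (0 : ℝ) one_pos)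
    (Eventually.of_forall fun x => Continuous.aestronglyMeasurable (by fun_prop)) hG0
    (Continuous.aestronglyMeasurable (by fun_prop)) hbound
    ((integrable_contourMeasure_mul_exp_norm (c := 3) hM (by norm_num)).norm.const_mul _)
    (Eventually.of_forall fun p x _ => by
      have h : HasDerivAt (fun x : ℝ => 2 * Complex.I * x * p.1 + p.1 ^ 2)
          (2 * Complex.I * p.1) x := by
        simpa using ((((hasDerivAt_id x).ofReal_comp).const_mul (2 * Complex.I)).mul_const
          p.1).add_const (p.1 ^ 2)
      exact h.cexp.const_mul p.2)).2
  have h0 : ∫ p, G' 0 p ∂contourMeasure M = 0 := by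
    refine hderiv.unique ?_
    simp only [hGzero]
    exact hasDerivAt_const _ _
  have hg : Continuous fun z : ℂ => z * Complex.exp (z ^ 2) := by fun_prop
  have hres := (contourMeasure_integral hM hg
    (gammaIntegrable_expExp_mul (C := Real.exp (A ^ 2)) (c := 1) hM zero_le_one hg
      fun z hz => by
        rw [norm_mul, mul_comm, one_mul]
        gcongr
        · exact hexp_sq z hz
        · linarith [Real.add_one_le_exp ‖z‖])).2
  have h1 : ∀ p : ℂ × ℂ, G' 0 p = 2 * Complex.I * (p.2 * (p.1 * Complex.exp (p.1 ^ 2))) := by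
    intro p; simp [G']; ring
  simp only [h1, MeasureTheory.integral_const_mul] at h0
  rw [← hres, gammaInt_expExp_mul_id_mul_exp_sq hM] at h0
  simp [Real.pi_ne_zero] at h0

theorem statement19 (M : ℝ) (hM : 0 < M)
    (f : ℝ → ℂ)
    (hf : ∀ lam : ℝ, f lam = (1 / (2 * Real.pi * Complex.I)) *
      gammaInt M (fun ζ : ℂ => Complex.exp (Complex.exp (-ζ ^ 2)) * Complex.exp (ζ * lam)))
    (H : ℝ → ℝ → ℂ)
    (hH : ∀ x t : ℝ, H x t =
      ∫ lam : ℝ, Complex.exp (-(t : ℂ) * lam ^ 2) * Complex.exp (Complex.I * x * lam) * f lam) :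
    (∀ x t : ℝ, 0 < t → MeasureTheory.Integrable (fun lam : ℝ =>
      Complex.exp (-(t : ℂ) * lam ^ 2) * Complex.exp (Complex.I * x * lam) * f lam)) ∧
    ContDiffOn ℝ (⊤ : ℕ∞) (fun q : ℝ × ℝ => H q.1 q.2) (Set.univ ×ˢ Set.Ioi (0:ℝ)) ∧
    (∀ x t : ℝ, 0 < t →
      deriv (fun τ : ℝ => H x τ) t = iteratedDeriv 2 (fun ξ : ℝ => H ξ t) x) ∧
    (∀ x : ℝ, Filter.Tendsto (fun t : ℝ => H x t)
      (nhdsWithin 0 (Set.Ioi (0:ℝ))) (nhds 0)) ∧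
    (∃ x t : ℝ, 0 < t ∧ H x t ≠ 0) := by
  have hf' : ∀ M', M ≤ M' → f = fun lam : ℝ => (1 / (2 * Real.pi * Complex.I)) *
      ∫ p, p.2 * Complex.exp (p.1 * lam) ∂contourMeasure M' := fun M' hM' =>
    funext fun lam => by rw [hf lam, ← gammaInt_expExp_mul_exp hM hM' lam]; rfl
  have hre : ∀ M', 0 < M' → ∀ᵐ p ∂contourMeasure M', |p.1.re| ≤ Real.pi / (2 * M') :=
    fun M' hM' => (ae_contourMeasure hM').mono fun p hp => hp.1
  have hint : ∀ x t : ℝ, 0 < t → Integrable fun lam : ℝ =>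
      Complex.exp (-(t : ℂ) * lam ^ 2) * Complex.exp (Complex.I * x * lam) * f lam := by
    intro x t ht
    refine ((integrable_gaussian_wave_mul_integral (integrable_snd_contourMeasure hM)
      (hre M hM) x ht).const_mul (1 / (2 * Real.pi * Complex.I))).congr
      (Eventually.of_forall fun lam => ?_)
    rw [hf' M le_rfl]
    ring
  have hgauss : ∀ t : ℝ, 0 < t →
      Integrable fun lam : ℝ => Complex.exp (-(t : ℂ) * lam ^ 2) * f lam := by
    intro t ht
    simpa using hint 0 t ht
  have hmoment : ∀ x t : ℝ, H x t = heatMoment f 0 (x, t) := by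
    intro x t
    rw [hH, heatMoment]
    simp
  have hkernel : ∀ M', M ≤ M' → ∀ x t : ℝ, 0 < t → H x t = (1 / (2 * Real.pi * Complex.I)) *
      ((Real.pi / t : ℂ) ^ (1 / 2 : ℂ) *
        ∫ p, p.2 * Complex.exp ((Complex.I * x + p.1) ^ 2 / (4 * t)) ∂contourMeasure M') := by
    intro M' hM' x t ht
    rw [hH, ← integral_gaussian_wave_mul_integral
      (integrable_snd_contourMeasure (hM.trans_le hM')) (hre M' (hM.trans_le hM')) x ht,
      ← MeasureTheory.integral_const_mul, hf' M' hM']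
    congr 1 with lam
    ring
  refine ⟨hint, ?_, fun x t ht => ?_, fun x => ?_, ?_⟩
  · simp only [hmoment]
    exact contDiffOn_infty.2 fun n => contDiffOn_heatMoment hgauss n 0
  · simp only [hmoment]
    exact heatMoment_heat_equation hgauss 0 x ht
  · set M' := max M (|x| + 3)
    have hlim := (tendsto_heat_kernel_factor (∫ p, ‖p.2‖ ∂contourMeasure M')).const_mul
      ‖(1 / (2 * Real.pi * Complex.I) : ℂ)‖
    rw [mul_zero] at hlim
    refine squeeze_zero_norm' ?_ hlim
    filter_upwards [self_mem_nhdsWithin] with t ht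
    rw [hkernel M' (le_max_left _ _) x t ht, norm_mul, norm_mul]
    gcongr
    exact norm_integral_heat_kernel_le (le_max_right _ _) ht
  · obtain ⟨x, hx⟩ := exists_integral_heat_kernel_ne_zero hM
    refine ⟨x, 1 / 4, by norm_num, ?_⟩
    rw [hkernel M le_rfl x (1 / 4) (by norm_num)]
    refine mul_ne_zero (by simp [Real.pi_ne_zero]) (mul_ne_zero ?_ ?_)
    · simp [Complex.cpow_eq_zero_iff, Real.pi_ne_zero]
    · simpa using hx
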